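/- Let a > 0 and b ≥ 0 be constants, let f : ℝ → ℝ be continuous with f(0) = 0 and f(s) > 0 for all s > 0, let λ ≤ 0 and t ∈ [0,1]. If u ∈ C⁴([0,1]) satisfies u''''(x) − (a + b∫₀¹(u'(s))²ds)·u''(x) = t·λ·f(u⁺(x)) on (0,1), where u⁺(x) = max{u(x), 0}, and u(0) = u(1) = u''(0) = u''(1) = 0, then u(x) = 0 for all x ∈ [0,1]. In particular, for λ < 0 the problem u''''(x) − (a + b∫₀¹(u'(s))²ds)·u''(x) = λ·f(u(x)) with these boundary conditions has no positive solution. -/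

import Mathlib

/-! Multiply the equation by `u` and integrate by parts twice: with the hinged boundary conditions
this gives `∫ (u'')² + K ∫ (u')² = ∫ u · g`, where `K = a + b ∫ (u')² > 0` and `g` is the right-hand
side. For `g = t λ f(u⁺)` with `λ ≤ 0` the right side is `≤ 0`, hence `u' = 0` and `u = 0`.

The integration by parts is carried out on antiderivatives: the function
`E = u u''' - u' u'' - K u u'` vanishes at `0` and `1`, and
`E' = u g - (u'')² - K (u')² ≤ 0`. So `E` is antitone with equal endpoint values, thus constant,
and `E' = 0` forces `u' = 0` (`eq_zero_of_mul_rhs_nonpos`). The nonexistence of positive solutions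
is the special case where `u⁺ = u` and `t = 1`. -/

open Set MeasureTheory intervalIntegral Real Filter Topology

/-- The `n`-th derivative of `u` on the interval `[0,1]` (one-sided at the endpoints). -/
noncomputable def D (n : ℕ) (u : ℝ → ℝ) : ℝ → ℝ :=
  iteratedDerivWithin n u (Set.Icc 0 1)

/-- The supremum norm `‖u‖∞ = sup_{x ∈ [0,1]} |u x|`. -/
noncomputable def normInf (u : ℝ → ℝ) : ℝ :=
  ⨆ x : Set.Icc (0:ℝ) 1, |u x|

/-- The hinged boundary conditions `u(0) = u(1) = u''(0) = u''(1) = 0`. -/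
def BC (u : ℝ → ℝ) : Prop :=
  u 0 = 0 ∧ u 1 = 0 ∧ D 2 u 0 = 0 ∧ D 2 u 1 = 0

/-- The Kirchhoff nonlocal coefficient `a + b ∫₀¹ (u'(t))² dt`. -/
noncomputable def KCoef (a b : ℝ) (u : ℝ → ℝ) : ℝ :=
  a + b * ∫ t in (0:ℝ)..1, (D 1 u t) ^ 2

theorem continuousOn_D {u : ℝ → ℝ} (hu : ContDiffOn ℝ 4 u (Icc 0 1)) {n : ℕ} (hn : n ≤ 4) :
    ContinuousOn (D n u) (Icc 0 1) :=
  hu.continuousOn_iteratedDerivWithin (by exact_mod_cast hn) (uniqueDiffOn_Icc zero_lt_one)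

theorem hasDerivAt_D {u : ℝ → ℝ} (hu : ContDiffOn ℝ 4 u (Icc 0 1)) {n : ℕ} (hn : n < 4)
    {x : ℝ} (hx : x ∈ Ioo (0 : ℝ) 1) : HasDerivAt (D n u) (D (n + 1) u x) x := by
  have h := hu.differentiableOn_iteratedDerivWithin (m := n) (by exact_mod_cast hn)
    (uniqueDiffOn_Icc zero_lt_one) x (Ioo_subset_Icc_self hx)
  have h' := h.hasDerivWithinAt.hasDerivAt (Icc_mem_nhds hx.1 hx.2)
  unfold D
  rwa [iteratedDerivWithin_succ]

theorem D_zero (u : ℝ → ℝ) : D 0 u = u := by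
  simp [D]

theorem KCoef_pos {a b : ℝ} (ha : 0 < a) (hb : 0 ≤ b) (u : ℝ → ℝ) : 0 < KCoef a b u :=
  add_pos_of_pos_of_nonneg ha <| mul_nonneg hb <|
    intervalIntegral.integral_nonneg zero_le_one fun _ _ => sq_nonneg _

/-- On an interval, a function with nonpositive derivative and equal endpoint values is constant. -/
theorem eq_left_of_deriv_nonpos {E E' : ℝ → ℝ} (hc : ContinuousOn E (Icc 0 1))
    (hd : ∀ x ∈ Ioo (0 : ℝ) 1, HasDerivAt E (E' x) x) (hE : ∀ x ∈ Ioo (0 : ℝ) 1, E' x ≤ 0)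
    (h01 : E 0 = E 1) {x : ℝ} (hx : x ∈ Icc (0 : ℝ) 1) : E x = E 0 := by
  have hanti : AntitoneOn E (Icc 0 1) := by
    refine antitoneOn_of_deriv_nonpos (convex_Icc 0 1) hc ?_ ?_ <;> rw [interior_Icc]
    · exact fun y hy => (hd y hy).differentiableAt.differentiableWithinAt
    · exact fun y hy => (hd y hy).deriv ▸ hE y hy
  refine le_antisymm (hanti (left_mem_Icc.2 zero_le_one) hx hx.1) ?_
  exact h01 ▸ hanti hx (right_mem_Icc.2 zero_le_one) hx.2

/-- The energy argument: a hinged function `u` with `u · (u'''' - K u'') ≤ 0` for some constant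
`K > 0` vanishes identically. -/
theorem eq_zero_of_mul_rhs_nonpos {u : ℝ → ℝ} (hu : ContDiffOn ℝ 4 u (Icc 0 1)) {K : ℝ}
    (hK : 0 < K) (hbc : BC u)
    (h : ∀ x ∈ Ioo (0 : ℝ) 1, u x * (D 4 u x - K * D 2 u x) ≤ 0) :
    ∀ x ∈ Icc (0 : ℝ) 1, u x = 0 := by
  obtain ⟨h0, h1, h20, h21⟩ := hbc
  have hcu : ContinuousOn u (Icc 0 1) := hu.continuousOn
  have hdu : ∀ x ∈ Ioo (0 : ℝ) 1, HasDerivAt u (D 1 u x) x := fun x hx => by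
    simpa only [D_zero] using hasDerivAt_D hu (n := 0) (by norm_num) hx
  set E : ℝ → ℝ := fun x => u x * D 3 u x - D 1 u x * D 2 u x - K * (u x * D 1 u x) with hEdef
  have hEc : ContinuousOn E (Icc 0 1) := by
    have c1 := continuousOn_D hu (n := 1) (by norm_num)
    have c2 := continuousOn_D hu (n := 2) (by norm_num)
    have c3 := continuousOn_D hu (n := 3) (by norm_num)
    exact ((hcu.mul c3).sub (c1.mul c2)).sub (continuousOn_const.mul (hcu.mul c1))
  have hEd : ∀ x ∈ Ioo (0 : ℝ) 1, HasDerivAt E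
      (u x * (D 4 u x - K * D 2 u x) - D 2 u x ^ 2 - K * D 1 u x ^ 2) x := fun x hx => by
    have d1 := hasDerivAt_D hu (n := 1) (by norm_num) hx
    have d2 := hasDerivAt_D hu (n := 2) (by norm_num) hx
    have d3 := hasDerivAt_D hu (n := 3) (by norm_num) hx
    have d0 := hdu x hx
    refine (((d0.mul d3).sub (d1.mul d2)).sub ((d0.mul d1).const_mul K)).congr_deriv ?_
    ring
  have hE0 : E 0 = 0 := by simp [hEdef, h0, h20]
  have hE1 : E 1 = 0 := by simp [hEdef, h1, h21]
  have hEzero : ∀ x ∈ Icc (0 : ℝ) 1, E x = 0 := fun x hx => by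
    rw [eq_left_of_deriv_nonpos hEc hEd ?_ (hE0.trans hE1.symm) hx, hE0]
    intro y hy
    nlinarith [h y hy, sq_nonneg (D 2 u y), mul_nonneg hK.le (sq_nonneg (D 1 u y))]
  have hD1 : ∀ x ∈ Ioo (0 : ℝ) 1, D 1 u x = 0 := fun x hx => by
    have hev : E =ᶠ[𝓝 x] fun _ => 0 := by
      filter_upwards [Icc_mem_nhds hx.1 hx.2] with y hy using hEzero y hy
    have he := (hEd x hx).unique ((hasDerivAt_const x (0 : ℝ)).congr_of_eventuallyEq hev)
    have hsq : K * D 1 u x ^ 2 = 0 :=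
      le_antisymm (by linarith [h x hx, sq_nonneg (D 2 u x)]) (by positivity)
    simpa [hK.ne'] using hsq
  intro x hx
  rw [eq_left_of_deriv_nonpos hcu hdu (fun y hy => (hD1 y hy).le) (h0.trans h1.symm) hx, h0]

/-- For `λ ≤ 0` and `t ∈ [0,1]`, every solution of
`u'''' - (a + b∫₀¹(u')²)u'' = t·λ·f(u⁺)` with hinged boundary conditions vanishes
identically; in particular, for `λ < 0` the problem with right-hand side `λ·f(u)` has
no positive solution. -/
theorem stmt11 (a b : ℝ) (ha : 0 < a) (hb : 0 ≤ b)
    (f : ℝ → ℝ) (hf : Continuous f) (hf0 : f 0 = 0) (hfp : ∀ s : ℝ, 0 < s → 0 < f s)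
    (lam : ℝ) (hlam : lam ≤ 0) (t : ℝ) (ht : t ∈ Set.Icc (0:ℝ) 1) :
    (∀ u : ℝ → ℝ, ContDiffOn ℝ 4 u (Set.Icc 0 1) →
        (∀ x ∈ Set.Ioo (0:ℝ) 1,
          D 4 u x - KCoef a b u * D 2 u x = t * lam * f (max (u x) 0)) → BC u →
        ∀ x ∈ Set.Icc (0:ℝ) 1, u x = 0) ∧
    (∀ mu : ℝ, mu < 0 →
      ¬ ∃ u : ℝ → ℝ, ContDiffOn ℝ 4 u (Set.Icc 0 1) ∧
          (∀ x ∈ Set.Ioo (0:ℝ) 1,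
            D 4 u x - KCoef a b u * D 2 u x = mu * f (u x)) ∧ BC u ∧
          (∀ x ∈ Set.Ioo (0:ℝ) 1, 0 < u x)) := by
  -- Both parts are instances of the sign condition `u · c f(u⁺) ≤ 0` for a constant `c ≤ 0`.
  have key : ∀ c : ℝ, c ≤ 0 → ∀ u : ℝ → ℝ, ContDiffOn ℝ 4 u (Set.Icc 0 1) →
      (∀ x ∈ Set.Ioo (0:ℝ) 1,
        D 4 u x - KCoef a b u * D 2 u x = c * f (max (u x) 0)) → BC u →
      ∀ x ∈ Set.Icc (0:ℝ) 1, u x = 0 := by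
    intro c hc u hu heq hbc
    refine eq_zero_of_mul_rhs_nonpos hu (KCoef_pos ha hb u) hbc fun x hx => ?_
    rw [heq x hx]
    rcases le_or_gt (u x) 0 with hux | hux
    · simp [max_eq_right hux, hf0]
    · rw [max_eq_left hux.le]
      exact mul_nonpos_of_nonneg_of_nonpos hux.le
        (mul_nonpos_of_nonpos_of_nonneg hc (hfp _ hux).le)
  refine ⟨key (t * lam) (mul_nonpos_of_nonneg_of_nonpos ht.1 hlam), ?_⟩
  rintro mu hmu ⟨u, hu, heq, hbc, hpos⟩
  have hhalf : (1 / 2 : ℝ) ∈ Ioo (0 : ℝ) 1 := by norm_num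
  refine (hpos _ hhalf).ne' (key mu hmu.le u hu (fun x hx => ?_) hbc _ (Ioo_subset_Icc_self hhalf))
  rw [max_eq_left (hpos x hx).le]
  exact heq x hx
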